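/- Let n ≥ 2 and let K, L ⊆ ℝⁿ be bounded measurable sets. Then sup_{x ∈ K, y ∈ L} [x,y] ≥ ω_n^{-2/n} · (V(K)V(L))^{1/n}. -/

import Mathlib

/-!
The proof first reduces the inequality to the following: if `[x,y] ≤ 1` for all `x ∈ K`, `y ∈ L`,
then `V(K) V(L) ≤ ω_n²`. For `s` larger than the supremum, this is applied to `s⁻¹ K` and `L`, and
`s` then decreases to the supremum.

The normalized inequality has two ingredients, with `L° = {z : |⟨z,y⟩| ≤ 1 for all y ∈ L}`.

* `volume_le_absPolar`: `V(K) ≤ V(L°)`. If `z ⊥ x` and `|z| = |x|`, Bessel's inequality gives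
  `|⟨z,y⟩| ≤ [x,y]`, so `x ∈ K` implies `z ∈ L°`. For `n ≥ 2` such a `z` exists on the orbit of each
  `x` under the orthogonal group, and averaging over Haar measure compares the volumes.
* `volume_absPolar_mul_le`: the Blaschke–Santaló inequality `V(L°) V(L) ≤ ω_n²`. Steiner
  symmetrization along the coordinate axes preserves the volume of a symmetric set and does not
  decrease the volume of its polar (`volume_polar_le_steiner`); after all axes have been treated the
  set is unconditional. For unconditional sets the inequality follows from the Prékopa–Leindler
  inequality for the geometric mean (`SignInvariant.volume_mul_le`), because
  `∑ (√|x_i y_i|)² = ∑ |x_i y_i| ≤ 1` for `x` in the set and `y` in its polar.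

Both facts about polar volumes come from the one-dimensional inequality `prekopa`, transported to the
means `(x - y) / 2` and `√|x y|` and tensorized in `IsPrekopaMean.lmarginal_mul_le`.
-/

open MeasureTheory Metric Set
open scoped RealInnerProductSpace ENNReal

noncomputable section

/-- `[x,y]`: the area of the parallelogram spanned by `x` and `y`. -/
def sinePair {n : ℕ} (x y : EuclideanSpace ℝ (Fin n)) : ℝ :=
  Real.sqrt (‖x‖ ^ 2 * ‖y‖ ^ 2 - ⟪x, y⟫ ^ 2)

/-- `ω_q = π^{q/2}/Γ(1+q/2)`. -/
def omegaVol (q : ℝ) : ℝ := Real.pi ^ (q / 2) / Real.Gamma (1 + q / 2)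

/-- The rotation invariant probability measure on the unit sphere `S^{n-1}`. -/
def sphereProb (n : ℕ) : Measure (sphere (0 : EuclideanSpace ℝ (Fin n)) 1) :=
  ((volume : Measure (EuclideanSpace ℝ (Fin n))).toSphere univ)⁻¹ •
    (volume : Measure (EuclideanSpace ℝ (Fin n))).toSphere

/-- The radial function of a set star-shaped about the origin. -/
def radialFn {n : ℕ} (K : Set (EuclideanSpace ℝ (Fin n))) (u : EuclideanSpace ℝ (Fin n)) : ℝ :=
  sSup {r : ℝ | 0 ≤ r ∧ r • u ∈ K}

/-- `K` is star-shaped about the origin. -/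
def IsStarShaped {n : ℕ} (K : Set (EuclideanSpace ℝ (Fin n))) : Prop :=
  0 ∈ K ∧ ∀ x ∈ K, ∀ t : ℝ, 0 ≤ t → t ≤ 1 → t • x ∈ K

/-- `K` is a star body: star-shaped about the origin, with radial function positive and
continuous on the unit sphere, and `K = {r • u : u ∈ S^{n-1}, 0 ≤ r ≤ ρ_K(u)}`. -/
def IsStarBody {n : ℕ} (K : Set (EuclideanSpace ℝ (Fin n))) : Prop :=
  IsStarShaped K ∧
  (∀ u ∈ sphere (0 : EuclideanSpace ℝ (Fin n)) 1, 0 < radialFn K u) ∧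
  ContinuousOn (radialFn K) (sphere (0 : EuclideanSpace ℝ (Fin n)) 1) ∧
  ∀ u ∈ sphere (0 : EuclideanSpace ℝ (Fin n)) 1, ∀ r : ℝ, 0 ≤ r →
    (r • u ∈ K ↔ r ≤ radialFn K u)

/-- The constant `c̃_{n,p}`. -/
def tildeC (n : ℕ) (p : ℝ) : ℝ :=
  ((n : ℝ) - 1) * omegaVol ((n : ℝ) - 1) * omegaVol ((n : ℝ) + p - 2) /
    (((n : ℝ) + p) * omegaVol (n : ℝ) * omegaVol ((n : ℝ) + p - 3))

/-- The polar body `Λ_p°K` of the `L_p`-sine centroid body of `K`. -/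
def sineCentroidPolar (n : ℕ) (p : ℝ) (K : Set (EuclideanSpace ℝ (Fin n))) :
    Set (EuclideanSpace ℝ (Fin n)) :=
  {x | ∫ y in K, sinePair x y ^ p ≤ tildeC n p * (volume K).toReal}

/-- The sine polar body `K^◇`. -/
def sinePolar {n : ℕ} (K : Set (EuclideanSpace ℝ (Fin n))) : Set (EuclideanSpace ℝ (Fin n)) :=
  {x | ∀ y ∈ K, sinePair x y ≤ 1}

/-- The closed solid cylinder `C⁻(u,r)`. -/
def solidCylinder {n : ℕ} (u : EuclideanSpace ℝ (Fin n)) (r : ℝ) :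
    Set (EuclideanSpace ℝ (Fin n)) := {x | sinePair x u ≤ r}

/-- `K ∈ C_e^n`: an origin-symmetric convex body that is an intersection of closed solid
cylinders. -/
def IsCylBody {n : ℕ} (K : Set (EuclideanSpace ℝ (Fin n))) : Prop :=
  IsCompact K ∧ Convex ℝ K ∧ (interior K).Nonempty ∧ (∀ x ∈ K, -x ∈ K) ∧
  ∃ I : Set (EuclideanSpace ℝ (Fin n) × ℝ),
    (∀ c ∈ I, c.1 ∈ sphere (0 : EuclideanSpace ℝ (Fin n)) 1 ∧ 0 < c.2) ∧
    K = ⋂ c ∈ I, solidCylinder c.1 c.2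

/-- The cylindrical hull of a set. -/
def cylHull {n : ℕ} (E : Set (EuclideanSpace ℝ (Fin n))) : Set (EuclideanSpace ℝ (Fin n)) :=
  ⋂ c ∈ {c : EuclideanSpace ℝ (Fin n) × ℝ |
      c.1 ∈ sphere (0 : EuclideanSpace ℝ (Fin n)) 1 ∧ 0 < c.2 ∧ E ⊆ solidCylinder c.1 c.2},
    solidCylinder c.1 c.2

/-- The cylindrical support function `c_K`. -/
def cylSupport {n : ℕ} (K : Set (EuclideanSpace ℝ (Fin n))) (x : EuclideanSpace ℝ (Fin n)) : ℝ :=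
  sSup ((fun y => sinePair x y) '' K)

/-- The support function `h_K`. -/
def suppFn {n : ℕ} (K : Set (EuclideanSpace ℝ (Fin n))) (x : EuclideanSpace ℝ (Fin n)) : ℝ :=
  sSup ((fun y => ⟪x, y⟫) '' K)

/-! ### The Prékopa–Leindler inequality on the line -/

/-- The one-dimensional Brunn–Minkowski inequality for compact sets: translates of `A` and `B`
meeting in the single point `max A + min B` both lie in `A + B`. -/
theorem volume_add_le_of_isCompact {A B C : Set ℝ} (hA : IsCompact A) (hB : IsCompact B)
    (hA0 : A.Nonempty) (hB0 : B.Nonempty) (h : ∀ a ∈ A, ∀ b ∈ B, a + b ∈ C) :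
    volume A + volume B ≤ volume C := by
  obtain ⟨x, hx, hxA⟩ := hA.exists_isGreatest hA0
  obtain ⟨y, hy, hyB⟩ := hB.exists_isLeast hB0
  have h1 : volume ((fun t => y + t) '' A) = volume A := by simp
  have h2 : volume ((fun t => x + t) '' B) = volume B := by simp
  rw [← h1, ← h2, ← measure_union₀]
  · refine measure_mono (union_subset ?_ ?_)
    · rintro _ ⟨a, ha, rfl⟩
      simpa [add_comm] using h a ha y hy
    · rintro _ ⟨b, hb, rfl⟩
      exact h x hx b hb
  · exact (hB.image (by fun_prop)).measurableSet.nullMeasurableSet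
  · refine measure_mono_null (t := {x + y}) ?_ (by simp)
    rintro _ ⟨⟨a, ha, rfl⟩, ⟨b, hb, hab⟩⟩
    have h3 := hxA ha
    have h4 := hyB hb
    simp only at hab
    simp only [mem_singleton_iff]
    linarith

/-- The one-dimensional Brunn–Minkowski inequality; `C` stands for any superset of `A + B`, which
avoids asking for measurability of `A + B`. -/
theorem volume_add_le {A B C : Set ℝ} (hA : MeasurableSet A) (hB : MeasurableSet B)
    (hA0 : A.Nonempty) (hB0 : B.Nonempty) (h : ∀ a ∈ A, ∀ b ∈ B, a + b ∈ C) :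
    volume A + volume B ≤ volume C := by
  obtain ⟨a₀, ha₀⟩ := hA0
  obtain ⟨b₀, hb₀⟩ := hB0
  -- Adjoining a point keeps the compact approximations from inside nonempty.
  have key : ∀ k ⊆ A, IsCompact k → ∀ l ⊆ B, IsCompact l → volume k + volume l ≤ volume C := by
    intro k hkA hk l hlB hl
    refine le_trans (add_le_add (measure_mono (subset_insert a₀ k))
      (measure_mono (subset_insert b₀ l))) ?_
    refine volume_add_le_of_isCompact (hk.insert a₀) (hl.insert b₀) (insert_nonempty _ _)
      (insert_nonempty _ _) fun a ha b hb => h a ?_ b ?_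
    · exact insert_subset ha₀ hkA ha
    · exact insert_subset hb₀ hlB hb
  rw [hA.measure_eq_iSup_isCompact, hB.measure_eq_iSup_isCompact]
  simp only [iSup_and', iSup_subtype']
  have : Nonempty {k // k ⊆ A ∧ IsCompact k} := ⟨∅, by simp⟩
  have : Nonempty {k // k ⊆ B ∧ IsCompact k} := ⟨∅, by simp⟩
  exact ENNReal.iSup_add_iSup_le fun k l => key k k.2.1 k.2.2 l l.2.1 l.2.2

/-- The additive form of the one-dimensional Prékopa–Leindler inequality for functions normalized to
have supremum `1`: Brunn–Minkowski for the superlevel sets, all nonempty for levels in `(0, 1)`,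
integrated over the level. -/
theorem prekopa_of_iSup_eq_one {f g h : ℝ → ℝ≥0∞} (hf : Measurable f) (hg : Measurable g)
    (hh : Measurable h) (hf1 : ⨆ x, f x = 1) (hg1 : ⨆ x, g x = 1)
    (H : ∀ x y, f x * g y ≤ h ((x + y) / 2) ^ 2) :
    (∫⁻ x, f x) + ∫⁻ x, g x ≤ 2 * ∫⁻ x, h x := by
  -- The layer-cake formula; levels `t ≥ 1` contribute nothing.
  have lc : ∀ φ : ℝ → ℝ≥0∞, Measurable φ → (∀ x, φ x ≤ 1) →
      ∫⁻ x, φ x = ∫⁻ t in Ioo (0:ℝ) 1, volume {x | ENNReal.ofReal t < φ x} := by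
    intro φ hφ h1
    have e1 : ∀ x, φ x = ENNReal.ofReal (φ x).toReal := fun x =>
      (ENNReal.ofReal_toReal (ne_top_of_le_ne_top ENNReal.one_ne_top (h1 x))).symm
    rw [lintegral_congr e1, lintegral_eq_lintegral_meas_lt _
        (ae_of_all _ fun _ => ENNReal.toReal_nonneg)
      hφ.ennreal_toReal.aemeasurable, ← Ioo_union_Ici_eq_Ioi (zero_lt_one (α := ℝ)),
      lintegral_union measurableSet_Ici]
    · rw [setLIntegral_congr_fun (g := fun _ => 0) measurableSet_Ici]
      · simp only [lintegral_zero, add_zero]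
        refine setLIntegral_congr_fun measurableSet_Ioo fun t ht => ?_
        congr 1
        ext x
        simp only [mem_ofPred_eq]
        rw [ENNReal.ofReal_lt_iff_lt_toReal ht.1.le (ne_top_of_le_ne_top ENNReal.one_ne_top (h1 x))]
      · intro t ht
        have : {a | t < (φ a).toReal} = ∅ := by
          ext x
          simp only [mem_ofPred_eq, mem_empty_iff_false, iff_false, not_lt]
          exact (ENNReal.toReal_mono ENNReal.one_ne_top (h1 x)).trans (by simpa using ht)
        simp [this]
    · exact Set.disjoint_left.2 fun t ht ht' => not_lt.2 ht' ht.2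
  have hf1' : ∀ x, f x ≤ 1 := fun x => hf1 ▸ le_iSup f x
  have hg1' : ∀ x, g x ≤ 1 := fun x => hg1 ▸ le_iSup g x
  calc (∫⁻ x, f x) + ∫⁻ x, g x
      = ∫⁻ t in Ioo (0:ℝ) 1, (volume {x | ENNReal.ofReal t < f x}
          + volume {x | ENNReal.ofReal t < g x}) := by
        rw [lc f hf hf1', lc g hg hg1', lintegral_add_left]
        refine Antitone.measurable fun s t hst => measure_mono fun x hx => ?_
        exact (ENNReal.ofReal_le_ofReal hst).trans_lt hx
    _ ≤ ∫⁻ t in Ioo (0:ℝ) 1, 2 * volume {x | ENNReal.ofReal t < min (h x) 1} := by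
        refine setLIntegral_mono' measurableSet_Ioo fun t ht => ?_
        have ht1 : ENNReal.ofReal t < 1 := by simpa using ht.2
        have h2 : 2 * volume {x | ENNReal.ofReal t < min (h x) 1}
            = volume ((fun x => x * (2:ℝ)⁻¹) ⁻¹' {x | ENNReal.ofReal t < min (h x) 1}) := by
          rw [Real.volume_preimage_mul_right (by norm_num)]
          simp
        rw [h2]
        refine volume_add_le (measurableSet_lt measurable_const hf)
          (measurableSet_lt measurable_const hg) ?_ ?_ ?_
        · exact lt_iSup_iff.1 (hf1 ▸ ht1)
        · exact lt_iSup_iff.1 (hg1 ▸ ht1)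
        · intro a ha b hb
          simp only [mem_preimage, mem_ofPred_eq, lt_min_iff, ht1, and_true] at *
          have := H a b
          rw [div_eq_mul_inv] at this
          by_contra hle
          have h3 := this.trans (pow_le_pow_left' (not_lt.1 hle) 2)
          rw [sq] at h3
          exact absurd (ENNReal.mul_lt_mul ha hb) (not_lt.2 h3)
    _ = 2 * ∫⁻ x, min (h x) 1 := by
        rw [lintegral_const_mul' _ _ (by simp), ← lc _ (hh.min measurable_const) (by simp)]
    _ ≤ _ := by gcongr; simp

theorem four_mul_le_add_sq (a b : ℝ≥0∞) : 4 * (a * b) ≤ (a + b) ^ 2 := by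
  rcases eq_or_ne a ⊤ with rfl | ha
  · simp
  rcases eq_or_ne b ⊤ with rfl | hb
  · simp
  lift a to NNReal using ha
  lift b to NNReal using hb
  norm_cast
  exact (mul_assoc 4 a b) ▸ four_mul_le_sq_add a b

/-- The Prékopa–Leindler inequality on `ℝ` for the arithmetic mean, in squared form so that no
roots in `ℝ≥0∞` are needed. -/
theorem prekopa {f g h : ℝ → ℝ≥0∞} (hf : Measurable f) (hg : Measurable g)
    (hh : Measurable h) (H : ∀ x y, f x * g y ≤ h ((x + y) / 2) ^ 2) :
    (∫⁻ x, f x) * ∫⁻ x, g x ≤ (∫⁻ x, h x) ^ 2 := by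
  -- For bounded functions, divide by the suprema and use the arithmetic-geometric mean bound.
  have bdd : ∀ f g : ℝ → ℝ≥0∞, Measurable f → Measurable g → ⨆ x, f x ≠ ⊤ → ⨆ x, g x ≠ ⊤ →
      (∀ x y, f x * g y ≤ h ((x + y) / 2) ^ 2) →
      (∫⁻ x, f x) * ∫⁻ x, g x ≤ (∫⁻ x, h x) ^ 2 := by
    intro f g hf hg hfA hgB H
    set A := ⨆ x, f x with hA
    set B := ⨆ x, g x with hB
    rcases eq_or_ne A 0 with hA0 | hA0
    · have : ∀ x, f x = 0 := by simpa [hA0] using hA.symm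
      simp [this]
    rcases eq_or_ne B 0 with hB0 | hB0
    · have : ∀ x, g x = 0 := by simpa [hB0] using hB.symm
      simp [this]
    set c : ℝ≥0∞ := (A * B) ^ (1/2 : ℝ) with hc
    have hc2 : c ^ 2 = A * B := by
      rw [hc, ← ENNReal.rpow_natCast, ← ENNReal.rpow_mul]; simp
    have key := prekopa_of_iSup_eq_one (f := fun x => A⁻¹ * f x) (g := fun x => B⁻¹ * g x)
      (h := fun x => c⁻¹ * h x) (hf.const_mul _) (hg.const_mul _) (hh.const_mul _)
      (by rw [← ENNReal.mul_iSup, ← hA, ENNReal.inv_mul_cancel hA0 hfA])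
      (by rw [← ENNReal.mul_iSup, ← hB, ENNReal.inv_mul_cancel hB0 hgB])
      (fun x y => by
        calc A⁻¹ * f x * (B⁻¹ * g y) = (A⁻¹ * B⁻¹) * (f x * g y) := by ring
          _ ≤ (A⁻¹ * B⁻¹) * h ((x + y) / 2) ^ 2 := by gcongr; exact H x y
          _ = _ := by
            rw [mul_pow, ← ENNReal.inv_pow, hc2, ENNReal.mul_inv (.inl hA0) (.inl hfA)])
    rw [lintegral_const_mul _ hf, lintegral_const_mul _ hg, lintegral_const_mul _ hh] at key
    have k2 : 4 * ((A⁻¹ * ∫⁻ x, f x) * (B⁻¹ * ∫⁻ x, g x)) ≤ 4 * (c⁻¹ * ∫⁻ x, h x) ^ 2 := by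
      calc _ ≤ _ := four_mul_le_add_sq _ _
        _ ≤ (2 * (c⁻¹ * ∫⁻ x, h x)) ^ 2 := by gcongr
        _ = _ := by rw [mul_pow]; norm_num
    rw [ENNReal.mul_le_mul_iff_right (by norm_num) (by norm_num), mul_pow, ← ENNReal.inv_pow,
      hc2] at k2
    have e : (A * B)⁻¹ ≠ 0 := by simp [ENNReal.mul_eq_top, hfA, hgB]
    have e' : (A * B)⁻¹ ≠ ⊤ := by simp [hA0, hB0]
    rw [← ENNReal.mul_le_mul_iff_right e e']
    refine le_trans (le_of_eq ?_) k2
    rw [ENNReal.mul_inv (.inl hA0) (.inl hfA)]; ring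
  -- Unbounded functions are truncated at integer heights.
  have lim : ∀ f : ℝ → ℝ≥0∞, Measurable f → ∫⁻ x, f x = ⨆ N : ℕ, ∫⁻ x, min (f x) N := by
    intro f hf
    rw [← lintegral_iSup (fun N => hf.min measurable_const)]
    · congr 1; ext x
      rw [← inf_iSup_eq, ENNReal.iSup_natCast, inf_top_eq]
    · intro M N hMN x
      exact min_le_min_left _ (by exact_mod_cast hMN)
  rw [lim f hf, lim g hg, ENNReal.iSup_mul]
  refine iSup_le fun N => ?_
  rw [ENNReal.mul_iSup]
  refine iSup_le fun M => ?_
  refine bdd _ _ (hf.min measurable_const) (hg.min measurable_const) ?_ ?_ ?_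
  · exact ne_top_of_le_ne_top (ENNReal.natCast_ne_top N) (iSup_le fun x => min_le_right _ _)
  · exact ne_top_of_le_ne_top (ENNReal.natCast_ne_top M) (iSup_le fun x => min_le_right _ _)
  · intro x y
    exact (mul_le_mul' (min_le_left _ _) (min_le_left _ _)).trans (H x y)

/-! ### Prékopa–Leindler inequalities for other means, and in several variables -/

/-- The binary operation `m` on `ℝ` satisfies a Prékopa–Leindler inequality for Lebesgue measure,
within the class of functions invariant under `e`. The instances used are `m x y = (x - y) / 2` with
`e = id`, and `m x y = √|x y|` with `e` the absolute value. -/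
def IsPrekopaMean (m : ℝ → ℝ → ℝ) (e : ℝ → ℝ) : Prop :=
  ∀ f g h : ℝ → ℝ≥0∞, Measurable f → Measurable g → Measurable h →
    (∀ x, f (e x) = f x) → (∀ x, g (e x) = g x) → (∀ x, h (e x) = h x) →
    (∀ x y, f x * g y ≤ h (m x y) ^ 2) → (∫⁻ x, f x) * ∫⁻ x, g x ≤ (∫⁻ x, h x) ^ 2

theorem isPrekopaMean_sub : IsPrekopaMean (fun x y => (x - y) / 2) id := by
  intro f g h hf hg hh _ _ _ H
  have : ∫⁻ x, g x = ∫⁻ x, g (-x) := (lintegral_neg_eq_self g).symm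
  rw [this]
  refine prekopa hf (hg.comp measurable_neg) hh fun x y => ?_
  simpa using H x (-y)

theorem lintegral_eq_exp {f : ℝ → ℝ≥0∞} (he : ∀ x, f |x| = f x) :
    ∫⁻ x, f x = 2 * ∫⁻ u, ENNReal.ofReal (Real.exp u) * f (Real.exp u) := by
  have h1 : ∫⁻ u, ENNReal.ofReal (Real.exp u) * f (Real.exp u) = ∫⁻ x in Ioi 0, f x := by
    have := lintegral_image_eq_lintegral_abs_deriv_mul (s := univ) MeasurableSet.univ
      (fun x _ => (Real.hasDerivAt_exp x).hasDerivWithinAt) Real.exp_injective.injOn f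
    rw [image_univ, Real.range_exp] at this
    simp only [Measure.restrict_univ, Real.abs_exp] at this
    exact this.symm
  have h2 : ∫⁻ x in Iio 0, f x = ∫⁻ x in Ioi 0, f x := by
    rw [← lintegral_indicator measurableSet_Iio, ← lintegral_indicator measurableSet_Ioi,
      ← lintegral_neg_eq_self]
    congr 1; ext x
    have : f (-x) = f x := by rw [← he, abs_neg, he]
    simp [indicator, this]
  rw [h1, ← lintegral_add_compl f (measurableSet_Iio (a := (0 : ℝ))), compl_Iio, h2,
    setLIntegral_congr Ioi_ae_eq_Ici.symm, two_mul]

/-- The substitution `x = exp u` turns the geometric mean into the arithmetic one; the Jacobian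
factors satisfy the hypothesis with equality. -/
theorem isPrekopaMean_sqrt : IsPrekopaMean (fun x y => √|x * y|) (fun x => |x|) := by
  intro f g h hf hg hh ef eg eh H
  rw [lintegral_eq_exp ef, lintegral_eq_exp eg, lintegral_eq_exp eh, mul_pow]
  have := prekopa (f := fun u => ENNReal.ofReal (Real.exp u) * f (Real.exp u))
    (g := fun u => ENNReal.ofReal (Real.exp u) * g (Real.exp u))
    (h := fun u => ENNReal.ofReal (Real.exp u) * h (Real.exp u))
    (by fun_prop) (by fun_prop) (by fun_prop) (fun x y => by
      have h1 := H (Real.exp x) (Real.exp y)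
      have h2 : √|Real.exp x * Real.exp y| = Real.exp ((x + y) / 2) := by
        rw [← Real.exp_add, Real.abs_exp, Real.exp_half]
      simp only [h2] at h1
      rw [mul_pow, ← ENNReal.ofReal_pow (Real.exp_nonneg _), ← Real.exp_nat_mul]
      calc _ = ENNReal.ofReal (Real.exp x) * ENNReal.ofReal (Real.exp y)
            * (f (Real.exp x) * g (Real.exp y)) := by ring
        _ ≤ _ := by
          rw [← ENNReal.ofReal_mul (Real.exp_nonneg _), ← Real.exp_add]
          refine mul_le_mul' (le_of_eq ?_) h1
          congr 2; push_cast; ring)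
  calc _ = 2 ^ 2 * ((∫⁻ u, ENNReal.ofReal (Real.exp u) * f (Real.exp u)) *
        ∫⁻ u, ENNReal.ofReal (Real.exp u) * g (Real.exp u)) := by ring
    _ ≤ _ := by gcongr

/-- Tensorization: a one-dimensional Prékopa–Leindler inequality passes to integrals over any finite
set of coordinates, one coordinate at a time. -/
theorem IsPrekopaMean.lmarginal_mul_le {ι : Type*} [DecidableEq ι] {m : ℝ → ℝ → ℝ} {e : ℝ → ℝ}
    (hm : IsPrekopaMean m e)
    (he : ∀ x, e (e x) = e x) (s : Finset ι) :
    ∀ f g h : (ι → ℝ) → ℝ≥0∞, Measurable f → Measurable g → Measurable h →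
    (∀ x, f (fun i => e (x i)) = f x) → (∀ x, g (fun i => e (x i)) = g x) →
    (∀ x, h (fun i => e (x i)) = h x) →
    (∀ x y, f x * g y ≤ h (fun i => m (x i) (y i)) ^ 2) → ∀ x y,
    lmarginal (fun _ => volume) s f x * lmarginal (fun _ => volume) s g y ≤
      lmarginal (fun _ => volume) s h (fun i => m (x i) (y i)) ^ 2 := by
  induction s using Finset.induction with
  | empty => intro f g h _ _ _ _ _ _ H; simpa using H
  | insert i s hi ih =>
    intro f g h hf hg hh ef eg eh H
    have inv : ∀ f : (ι → ℝ) → ℝ≥0∞, (∀ x, f (fun i => e (x i)) = f x) → ∀ x a,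
        f (Function.update (fun j => e (x j)) i a) = f (Function.update x i a) := by
      intro f ef x a
      rw [← ef, ← ef (Function.update x i a)]
      congr 1; ext j
      rcases eq_or_ne j i with rfl | hj
      · simp
      · simp [hj, he]
    have inv' : ∀ f : (ι → ℝ) → ℝ≥0∞, (∀ x, f (fun i => e (x i)) = f x) → ∀ x a,
        f (Function.update x i (e a)) = f (Function.update x i a) := by
      intro f ef x a
      rw [← ef, ← ef (Function.update x i a)]
      congr 1; ext j
      rcases eq_or_ne j i with rfl | hj
      · simp [he]
      · simp [hj]
    have meas : ∀ f : (ι → ℝ) → ℝ≥0∞, Measurable f →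
        Measurable fun x => ∫⁻ a, f (Function.update x i a) := by
      intro f hf
      have := hf.lmarginal (fun _ : ι => (volume : Measure ℝ)) (s := {i})
      rwa [lmarginal_singleton] at this
    rw [lmarginal_insert' f hf hi, lmarginal_insert' g hg hi, lmarginal_insert' h hh hi]
    refine ih _ _ _ (meas f hf) (meas g hg) (meas h hh) ?_ ?_ ?_ ?_
    · intro x; simp only [inv f ef]
    · intro x; simp only [inv g eg]
    · intro x; simp only [inv h eh]
    · intro x y
      refine hm _ _ _ (hf.comp (measurable_update x)) (hg.comp (measurable_update y))
        (hh.comp (measurable_update _)) (inv' f ef x) (inv' g eg y) (inv' h eh _) fun a b => ?_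
      refine (H _ _).trans_eq ?_
      congr 2; ext j
      rcases eq_or_ne j i with rfl | hj
      · simp
      · simp [hj]

/-! ### Steiner symmetrization and polar sets -/

/-- The one-sided polar of `K` with respect to the standard pairing. -/
def piPolar {ι : Type*} [Fintype ι] (K : Set (ι → ℝ)) : Set (ι → ℝ) :=
  {y | ∀ x ∈ K, ∑ i, x i * y i ≤ 1}

theorem isClosed_piPolar {ι : Type*} [Fintype ι] (K : Set (ι → ℝ)) : IsClosed (piPolar K) := by
  have : piPolar K = ⋂ x ∈ K, {y | ∑ i, x i * y i ≤ 1} := by ext; simp [piPolar]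
  rw [this]
  exact isClosed_biInter fun x _ => isClosed_le (by fun_prop) continuous_const

/-- The Steiner symmetral of `K` in the direction of the `i`-th coordinate axis: each
fibre of `K` parallel to the axis is replaced by the centred open interval of the same length. -/
def steiner {ι : Type*} [DecidableEq ι] (i : ι) (K : Set (ι → ℝ)) : Set (ι → ℝ) :=
  {x | ENNReal.ofReal (2 * |x i|) < volume {a : ℝ | Function.update x i a ∈ K}}

theorem measurable_volume_fibre {ι : Type*} [DecidableEq ι] (i : ι) {K : Set (ι → ℝ)}
    (hK : MeasurableSet K) :
    Measurable fun x : ι → ℝ => volume {a : ℝ | Function.update x i a ∈ K} :=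
  measurable_measure_prodMk_left (ν := (volume : Measure ℝ))
    (s := {p : (ι → ℝ) × ℝ | Function.update p.1 i p.2 ∈ K}) (measurable_update' hK)

theorem measurableSet_steiner {ι : Type*} [DecidableEq ι] (i : ι) {K : Set (ι → ℝ)}
    (hK : MeasurableSet K) :
    MeasurableSet (steiner i K) :=
  measurableSet_lt (by fun_prop) (measurable_volume_fibre i hK)

theorem volume_abs_lt (c : ℝ≥0∞) : volume {a : ℝ | ENNReal.ofReal (2 * |a|) < c} = c := by
  rcases eq_or_ne c ⊤ with rfl | hc
  · simp only [ENNReal.ofReal_lt_top]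
    simp
  have : {a : ℝ | ENNReal.ofReal (2 * |a|) < c} = Ioo (-(c.toReal / 2)) (c.toReal / 2) := by
    ext a
    rw [mem_ofPred_eq, ENNReal.ofReal_lt_iff_lt_toReal (by positivity) hc, mem_Ioo, ← abs_lt]
    constructor <;> intro h <;> linarith
  rw [this, Real.volume_Ioo, show c.toReal / 2 - -(c.toReal / 2) = c.toReal by ring,
    ENNReal.ofReal_toReal hc]

theorem volume_steiner {ι : Type*} [Fintype ι] [DecidableEq ι] (i : ι) {K : Set (ι → ℝ)}
    (hK : MeasurableSet K) :
    volume (steiner i K) = volume K := by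
  have hS := measurableSet_steiner i hK
  rw [← lintegral_indicator_one hK, ← lintegral_indicator_one hS]
  refine lintegral_eq_of_lmarginal_eq {i} (measurable_one.indicator hS)
    (measurable_one.indicator hK) ?_
  have key : ∀ A : Set (ι → ℝ), MeasurableSet A → ∀ x,
      ∫⁻ a, A.indicator (1 : (ι → ℝ) → ℝ≥0∞) (Function.update x i a)
      = volume {a : ℝ | Function.update x i a ∈ A} := fun A hA x =>
    lintegral_indicator_one (s := {a : ℝ | Function.update x i a ∈ A}) (measurable_update x hA)
  rw [lmarginal_singleton, lmarginal_singleton]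
  ext x
  rw [key _ hS, key _ hK]
  conv_rhs => rw [← volume_abs_lt (volume {a : ℝ | Function.update x i a ∈ K})]
  simp [steiner]

/-- If `(y', t)` and `(z', t)` lie in the polar of the symmetric set `K`, then `((y' - z') / 2, t)`
lies in the polar of its Steiner symmetral. Testing `y` on points of `K` and `z` on their negatives
confines each fibre of `K` to an interval whose length gives the required bound. -/
theorem steiner_polar_mem {ι : Type*} [Fintype ι] [DecidableEq ι] {i : ι} {K : Set (ι → ℝ)}
    (hs : ∀ x ∈ K, -x ∈ K)
    {y z w : ι → ℝ} (hy : y ∈ piPolar K) (hz : z ∈ piPolar K) (hi : z i = y i)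
    (hwi : w i = y i) (hw : ∀ j, j ≠ i → w j = (y j - z j) / 2) : w ∈ piPolar (steiner i K) := by
  intro x hx
  have split : ∀ u v : ι → ℝ, ∑ j, u j * v j = u i * v i + ∑ j ∈ Finset.univ.erase i, u j * v j :=
    fun u v => (Finset.add_sum_erase _ _ (Finset.mem_univ i)).symm
  set p := ∑ j ∈ Finset.univ.erase i, x j * y j with hp
  set q := ∑ j ∈ Finset.univ.erase i, x j * z j with hq
  have hpq : ∑ j ∈ Finset.univ.erase i, x j * w j = (p - q) / 2 := by
    rw [hp, hq, ← Finset.sum_sub_distrib, Finset.sum_div]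
    refine Finset.sum_congr rfl fun j hj => ?_
    rw [hw j (Finset.ne_of_mem_erase hj)]; ring
  have upd : ∀ (a : ℝ) (v : ι → ℝ), ∑ j, Function.update x i a j * v j
      = a * v i + ∑ j ∈ Finset.univ.erase i, x j * v j := by
    intro a v
    rw [split, Function.update_self]
    congr 1
    refine Finset.sum_congr rfl fun j hj => ?_
    rw [Function.update_of_ne (Finset.ne_of_mem_erase hj)]
  have sub : {a : ℝ | Function.update x i a ∈ K} ⊆ (fun a => a * y i) ⁻¹' Icc (-1 - q) (1 - p) := by
    intro a ha
    have h1 := hy _ ha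
    have h2 := hz _ (hs _ ha)
    simp only [Pi.neg_apply, neg_mul, Finset.sum_neg_distrib] at h2
    rw [upd] at h1 h2
    rw [hi] at h2
    exact ⟨by linarith, by linarith⟩
  rw [split, hpq, hwi]
  have hx' := hx.trans_le (measure_mono sub)
  by_cases ht : y i = 0
  · rw [ht]
    obtain ⟨a, ha⟩ := nonempty_of_measure_ne_zero (bot_lt_of_lt hx').ne'
    have := ha.1.trans ha.2
    linarith
  · rw [Real.volume_preimage_mul_right ht, Real.volume_Icc, ← ENNReal.ofReal_mul (abs_nonneg _),
      ENNReal.ofReal_lt_ofReal_iff_of_nonneg (by positivity), abs_inv, ← div_eq_inv_mul,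
      lt_div_iff₀ (abs_pos.2 ht), mul_assoc, ← abs_mul] at hx'
    linarith [le_abs_self (x i * y i)]

/-- Steiner symmetrization does not decrease the polar volume of a symmetric set. At each height
`x i`, the slice of the polar of the symmetral contains half the difference set of the slice of
`piPolar K`, so its volume is at least as large. -/
theorem volume_polar_le_steiner {ι : Type*} [Fintype ι] [DecidableEq ι] (i : ι) {K : Set (ι → ℝ)}
    (hs : ∀ x ∈ K, -x ∈ K) :
    volume (piPolar K) ≤ volume (piPolar (steiner i K)) := by
  have h1 := (isClosed_piPolar K).measurableSet
  have h2 := (isClosed_piPolar (steiner i K)).measurableSet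
  rw [← lintegral_indicator_one h1, ← lintegral_indicator_one h2]
  have m1 : Measurable ((piPolar K).indicator (1 : (ι → ℝ) → ℝ≥0∞)) := measurable_one.indicator h1
  have m2 : Measurable ((piPolar (steiner i K)).indicator (1 : (ι → ℝ) → ℝ≥0∞)) :=
    measurable_one.indicator h2
  refine lintegral_le_of_lmarginal_le (Finset.univ.erase i) m1 m2 fun x => ?_
  have hi : i ∉ Finset.univ.erase i := Finset.notMem_erase _ _
  -- Freeze the `i`-th coordinate.
  have e1 := lmarginal_update_of_notMem (μ := fun _ : ι => (volume : Measure ℝ)) m1 hi x (x i)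
  have e2 := lmarginal_update_of_notMem (μ := fun _ : ι => (volume : Measure ℝ)) m2 hi x (x i)
  rw [Function.update_eq_self] at e1 e2
  rw [e1, e2]
  set F := (piPolar K).indicator (1 : (ι → ℝ) → ℝ≥0∞) ∘ (Function.update · i (x i)) with hF
  set G := (piPolar (steiner i K)).indicator (1 : (ι → ℝ) → ℝ≥0∞) ∘ (Function.update · i (x i))
    with hG
  have key := isPrekopaMean_sub.lmarginal_mul_le (fun _ => rfl) (Finset.univ.erase i)
    F F G (m1.comp measurable_update_left) (m1.comp measurable_update_left)
    (m2.comp measurable_update_left) (fun _ => rfl) (fun _ => rfl) (fun _ => rfl) (fun y z => by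
      by_cases hy : Function.update y i (x i) ∈ piPolar K
      swap; · simp [hF, hy]
      by_cases hz : Function.update z i (x i) ∈ piPolar K
      swap; · simp [hF, hz]
      have := steiner_polar_mem (i := i)
        (w := Function.update (fun j => (y j - z j) / 2) i (x i)) hs hy hz
        (by simp) (by simp) (fun j hj => by simp [hj])
      simp [hF, hG, hy, hz, this]) x (fun j => -x j)
  -- The marginal does not depend on the coordinates that are integrated out.
  have e3 : lmarginal (fun _ : ι => (volume : Measure ℝ)) (Finset.univ.erase i) F
      (fun j => -x j) = lmarginal (fun _ : ι => (volume : Measure ℝ)) (Finset.univ.erase i) F x := by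
    rw [hF, ← lmarginal_update_of_notMem m1 hi, ← lmarginal_update_of_notMem m1 hi]
    refine lmarginal_congr _ _ fun j hj => ?_
    have : j = i := by simpa using hj
    simp [this]
  have e4 : (fun j => (x j - -x j) / 2) = x := by ext j; ring
  rw [e3, e4, ← sq] at key
  by_contra hlt
  rw [sq, sq] at key
  exact absurd (ENNReal.mul_lt_mul (not_le.1 hlt) (not_le.1 hlt)) (not_lt.2 key)

/-! ### The Blaschke–Santaló inequality for symmetric sets -/

theorem neg_mem_steiner {ι : Type*} [DecidableEq ι] {i : ι} {K : Set (ι → ℝ)}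
    (hs : ∀ x ∈ K, -x ∈ K) : ∀ x ∈ steiner i K, -x ∈ steiner i K := by
  intro x hx
  have : {a : ℝ | Function.update (-x) i a ∈ K} = -{a : ℝ | Function.update x i a ∈ K} := by
    have e : ∀ a, Function.update (-x) i a = -Function.update x i (-a) := by
      intro a; ext j
      rcases eq_or_ne j i with rfl | hj
      · simp
      · simp [hj]
    ext a
    simp only [mem_ofPred_eq, Set.mem_neg, e]
    exact ⟨fun h => by simpa using hs _ h, fun h => hs _ h⟩
  simp only [steiner, mem_ofPred_eq] at hx ⊢
  rwa [this, Measure.measure_neg, Pi.neg_apply, abs_neg]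

/-- Invariance of `K` under sign changes of the coordinates in `s`. -/
def SignInvariant {ι : Type*} (s : Finset ι) (K : Set (ι → ℝ)) : Prop :=
  ∀ x ∈ K, ∀ x' : ι → ℝ, (∀ j, |x' j| = |x j|) → (∀ j ∉ s, x' j = x j) → x' ∈ K

theorem SignInvariant.steiner {ι : Type*} [DecidableEq ι] {s : Finset ι} {i : ι} {K : Set (ι → ℝ)}
    (hK : SignInvariant s K) : SignInvariant (insert i s) (steiner i K) := by
  intro x hx x' h1 h2
  simp only [_root_.steiner, mem_ofPred_eq, h1 i] at hx ⊢
  refine hx.trans_le (measure_mono fun a ha => hK _ ha _ (fun j => ?_) fun j hj => ?_)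
  · rcases eq_or_ne j i with rfl | hj
    · simp
    · simp [hj, h1]
  · rcases eq_or_ne j i with rfl | hji
    · simp
    · simp [hji, h2 j (by simp [hj, hji])]

/-- Successive Steiner symmetrization along the axes in `s`: the symmetries already obtained survive
the later steps. -/
theorem exists_signInvariant {ι : Type*} [Fintype ι] [DecidableEq ι] {K : Set (ι → ℝ)}
    (hK : MeasurableSet K) (hs : ∀ x ∈ K, -x ∈ K) (s : Finset ι) :
    ∃ K' : Set (ι → ℝ), MeasurableSet K' ∧ (∀ x ∈ K', -x ∈ K') ∧ SignInvariant s K' ∧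
      volume K' = volume K ∧ volume (piPolar K) ≤ volume (piPolar K') := by
  induction s using Finset.induction with
  | empty =>
    refine ⟨K, hK, hs, fun x hx x' _ h => ?_, rfl, le_rfl⟩
    rwa [show x' = x from funext fun j => h j (by simp)]
  | insert i s _ ih =>
    obtain ⟨K', h1, h2, h3, h4, h5⟩ := ih
    exact ⟨steiner i K', measurableSet_steiner i h1, neg_mem_steiner h2, h3.steiner,
      (volume_steiner i h1).trans h4, h5.trans (volume_polar_le_steiner i h2)⟩

theorem indicator_one_congr {α : Type*} {A : Set α} {x y : α} (h : x ∈ A ↔ y ∈ A) :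
    A.indicator (1 : α → ℝ≥0∞) x = A.indicator 1 y := by
  by_cases hy : y ∈ A
  · rw [indicator_of_mem hy, indicator_of_mem (h.2 hy)]; rfl
  · rw [indicator_of_notMem hy, indicator_of_notMem (mt h.1 hy)]

/-- The Blaschke–Santaló inequality for unconditional sets: if `x ∈ K` and `y ∈ K°`, then
`(√|x i y i|)ᵢ` lies in the unit ball, so the Prékopa–Leindler inequality for the geometric mean
applies to the three indicator functions. -/
theorem SignInvariant.volume_mul_le {ι : Type*} [Fintype ι] [DecidableEq ι] {K : Set (ι → ℝ)}
    (hK : MeasurableSet K) (hs : SignInvariant Finset.univ K) :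
    volume K * volume (piPolar K) ≤ volume {x : ι → ℝ | ∑ i, x i ^ 2 ≤ 1} ^ 2 := by
  have hP := (isClosed_piPolar K).measurableSet
  have hB : MeasurableSet {x : ι → ℝ | ∑ i, x i ^ 2 ≤ 1} :=
    measurableSet_le (by fun_prop) measurable_const
  have abs_iff : ∀ x : ι → ℝ, (fun i => |x i|) ∈ K ↔ x ∈ K := fun x =>
    ⟨fun h => hs _ h _ (by simp) (by simp), fun h => hs _ h _ (by simp) (by simp)⟩
  have sgn : ∀ y y' : ι → ℝ, (∀ j, |y' j| = |y j|) → y ∈ piPolar K → y' ∈ piPolar K := by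
    intro y y' h hy x hx
    have := hy (fun j => if y' j = y j then x j else -x j) (hs _ hx _
      (fun j => by split_ifs <;> simp) (by simp))
    refine le_trans (le_of_eq (Finset.sum_congr rfl fun j _ => ?_)) this
    split_ifs with hj
    · rw [hj]
    · rcases abs_eq_abs.1 (h j) with h' | h'
      · exact absurd h' hj
      · rw [h']; ring
  have pol_iff : ∀ y : ι → ℝ, (fun i => |y i|) ∈ piPolar K ↔ y ∈ piPolar K := fun y =>
    ⟨sgn _ _ (by simp), sgn _ _ (by simp)⟩
  have key := isPrekopaMean_sqrt.lmarginal_mul_le (fun x => abs_abs x) (Finset.univ : Finset ι)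
    (K.indicator 1) ((piPolar K).indicator 1) ({x : ι → ℝ | ∑ i, x i ^ 2 ≤ 1}.indicator 1)
    (measurable_one.indicator hK) (measurable_one.indicator hP) (measurable_one.indicator hB)
    (fun x => indicator_one_congr (abs_iff x)) (fun x => indicator_one_congr (pol_iff x))
    (fun x => by simp [indicator])
    (fun x y => by
      by_cases hx : x ∈ K
      swap; · simp [hx]
      by_cases hy : y ∈ piPolar K
      swap; · simp [hy]
      have h1 := (pol_iff y).2 hy _ ((abs_iff x).2 hx)
      have h2 : (fun i => √|x i * y i|) ∈ {x : ι → ℝ | ∑ i, x i ^ 2 ≤ 1} := by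
        simpa only [mem_ofPred_eq, Real.sq_sqrt, abs_nonneg, abs_mul, mul_nonneg] using h1
      simp only [indicator_of_mem hx, indicator_of_mem hy, indicator_of_mem h2]
      simp) 0 0
  simp only [lmarginal_univ] at key
  rwa [← volume_pi, lintegral_indicator_one hK, lintegral_indicator_one hP,
    lintegral_indicator_one hB] at key

/-- The Blaschke–Santaló inequality for symmetric measurable sets; the right-hand side is the square
of the volume of the Euclidean unit ball. -/
theorem volume_mul_piPolar_le {ι : Type*} [Fintype ι] [DecidableEq ι] {K : Set (ι → ℝ)}
    (hK : MeasurableSet K) (hs : ∀ x ∈ K, -x ∈ K) :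
    volume K * volume (piPolar K) ≤ volume {x : ι → ℝ | ∑ i, x i ^ 2 ≤ 1} ^ 2 := by
  obtain ⟨K', h1, -, h3, h4, h5⟩ := exists_signInvariant hK hs Finset.univ
  calc _ ≤ volume K' * volume (piPolar K') := by rw [h4]; gcongr
    _ ≤ _ := h3.volume_mul_le h1

/-- The polar of `L ∪ -L` in Euclidean space. -/
def absPolar {n : ℕ} (L : Set (EuclideanSpace ℝ (Fin n))) : Set (EuclideanSpace ℝ (Fin n)) :=
  {x | ∀ y ∈ L, |⟪x, y⟫| ≤ 1}

theorem isClosed_absPolar {n : ℕ} (L : Set (EuclideanSpace ℝ (Fin n))) :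
    IsClosed (absPolar L) := by
  have : absPolar L = ⋂ y ∈ L, {x | |⟪x, y⟫| ≤ 1} := by ext; simp [absPolar]
  rw [this]
  exact isClosed_biInter fun x _ => isClosed_le (by fun_prop) continuous_const

/-- The Blaschke–Santaló inequality with no symmetry assumption on `L`. It is applied to the symmetric
set `absPolar L`, whose polar contains `L`. -/
theorem volume_absPolar_mul_le {n : ℕ} {L : Set (EuclideanSpace ℝ (Fin n))}
    (hL : MeasurableSet L) :
    volume (absPolar L) * volume L ≤
      volume (closedBall (0 : EuclideanSpace ℝ (Fin n)) 1) ^ 2 := by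
  have tr := PiLp.volume_preserving_toLp (Fin n)
  have hc := (isClosed_absPolar L).measurableSet
  rw [← tr.measure_preimage hc.nullMeasurableSet, ← tr.measure_preimage hL.nullMeasurableSet,
    ← tr.measure_preimage isClosed_closedBall.measurableSet.nullMeasurableSet]
  have hball : (WithLp.toLp 2 : (Fin n → ℝ) → EuclideanSpace ℝ (Fin n)) ⁻¹' closedBall 0 1
      = {x : Fin n → ℝ | ∑ i, x i ^ 2 ≤ 1} := by
    ext x
    simp [EuclideanSpace.norm_eq]
  rw [hball]
  refine le_trans (mul_le_mul' le_rfl (measure_mono ?_))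
    (volume_mul_piPolar_le (tr.measurable hc) ?_)
  · intro y hy x hx
    refine le_trans (le_of_eq ?_) ((le_abs_self _).trans (hx _ hy))
    simp [PiLp.inner_apply, mul_comm]
  · intro x hx y hy
    have := hx y hy
    rwa [WithLp.toLp_neg, inner_neg_left, abs_neg]

/-! ### Averaging over the orthogonal group -/

theorem abs_inner_le_sinePair {n : ℕ} {x z : EuclideanSpace ℝ (Fin n)} (hn : ‖z‖ = ‖x‖)
    (hxz : ⟪x, z⟫ = 0) (y : EuclideanSpace ℝ (Fin n)) : |⟪z, y⟫| ≤ sinePair x y := by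
  refine Real.abs_le_sqrt ?_
  rcases eq_or_ne x 0 with rfl | hx
  · have : z = 0 := by simpa using hn
    simp [this]
  have hx' : 0 < ‖x‖ ^ 2 := by positivity
  -- Bessel's inequality for the pair `x, z`, cleared of denominators.
  have key : 0 ≤ ‖(‖x‖ ^ 2) • y - ⟪x, y⟫ • x - ⟪z, y⟫ • z‖ ^ 2 := by positivity
  rw [← real_inner_self_eq_norm_sq] at key
  have h2 : ⟪z, x⟫ = 0 := by rw [real_inner_comm, hxz]
  simp only [inner_sub_left, inner_sub_right, real_inner_smul_left, real_inner_smul_right,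
    hxz, h2, real_inner_comm x y, real_inner_comm z y] at key
  simp only [real_inner_self_eq_norm_sq, hn] at key
  have : 0 ≤ ‖x‖ ^ 2 * (‖x‖ ^ 2 * ‖y‖ ^ 2 - ⟪x, y⟫ ^ 2 - ⟪z, y⟫ ^ 2) := by
    linarith
  have := nonneg_of_mul_nonneg_right this hx'
  linarith

theorem exists_orthogonal {n : ℕ} (hn : 2 ≤ n) (x : EuclideanSpace ℝ (Fin n)) :
    ∃ z : EuclideanSpace ℝ (Fin n), ‖z‖ = ‖x‖ ∧ ⟪x, z⟫ = 0 := by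
  have hbot : (ℝ ∙ x)ᗮ ≠ ⊥ := by
    intro h
    have h1 := Submodule.finrank_add_finrank_orthogonal (ℝ ∙ x)
    have h2 := finrank_span_le_card (R := ℝ) ({x} : Set (EuclideanSpace ℝ (Fin n)))
    rw [h, finrank_bot, finrank_euclideanSpace_fin] at h1
    simp only [toFinset_singleton, Finset.card_singleton] at h2
    omega
  obtain ⟨w, hw, hw0⟩ := Submodule.exists_mem_ne_zero_of_ne_bot hbot
  have hw0' : ‖w‖ ≠ 0 := norm_ne_zero_iff.2 hw0
  refine ⟨(‖x‖ / ‖w‖) • w, ?_, ?_⟩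
  · rw [norm_smul, norm_div, norm_norm, norm_norm, div_mul_cancel₀ _ hw0']
  · rw [real_inner_smul_right, Submodule.mem_orthogonal_singleton_iff_inner_right.1 hw, mul_zero]

/-- The orthogonal group of `ℝⁿ`. -/
abbrev OrthGroup (n : ℕ) : Type :=
  unitary (EuclideanSpace ℝ (Fin n) →L[ℝ] EuclideanSpace ℝ (Fin n))

instance continuousStar_clm (n : ℕ) :
    ContinuousStar (EuclideanSpace ℝ (Fin n) →L[ℝ] EuclideanSpace ℝ (Fin n)) :=
  ⟨(ContinuousLinearMap.adjoint (𝕜 := ℝ) (E := EuclideanSpace ℝ (Fin n))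
    (F := EuclideanSpace ℝ (Fin n))).continuous⟩

instance orthGroup_compactSpace (n : ℕ) : CompactSpace (OrthGroup n) := by
  refine isCompact_iff_compactSpace.1 ?_
  refine Metric.isCompact_of_isClosed_isBounded isClosed_unitary ?_
  refine (Metric.isBounded_closedBall (x := 0) (r := 1)).subset fun u hu => ?_
  rw [mem_closedBall_zero_iff]
  refine ContinuousLinearMap.opNorm_le_bound _ zero_le_one fun x => ?_
  rw [one_mul]
  exact ((Unitary.linearIsometryEquiv ⟨u, hu⟩).norm_map x).le

/-- The Borel `σ`-algebra on the orthogonal group. -/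
instance orthGroup_measurableSpace (n : ℕ) : MeasurableSpace (OrthGroup n) := borel _

instance orthGroup_borelSpace (n : ℕ) : BorelSpace (OrthGroup n) := ⟨rfl⟩

/-- If `[x,y] ≤ 1` on `K × L`, then `V(K) ≤ V(L°)`. Both volumes are integrals over `x` of the
probability that a random rotation moves `x` into the set. This probability does not change when `x`
is replaced by `z ⊥ x` with `|z| = |x|`, and a rotation moving `x` into `K` moves `z` into `L°`. -/
theorem volume_le_absPolar {n : ℕ} (hn : 2 ≤ n) {K L : Set (EuclideanSpace ℝ (Fin n))}
    (hK : MeasurableSet K) (h : ∀ x ∈ K, ∀ y ∈ L, sinePair x y ≤ 1) :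
    volume K ≤ volume (absPolar L) := by
  have hP := (isClosed_absPolar L).measurableSet
  let μ : Measure (OrthGroup n) := Measure.haarMeasure ⊤
  have hμ : μ univ = 1 := by
    simpa using Measure.haarMeasure_self
      (K₀ := (⊤ : TopologicalSpace.PositiveCompacts (OrthGroup n)))
  have : IsFiniteMeasure μ := ⟨by rw [hμ]; exact ENNReal.one_lt_top⟩
  let E := EuclideanSpace ℝ (Fin n)
  let act : OrthGroup n → E → E := fun g x => (g⁻¹ : OrthGroup n).1 x
  have act_eq : ∀ g x, act g x = Unitary.linearIsometryEquiv (g⁻¹) x := fun g x => rfl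
  have hact : Continuous fun p : E × OrthGroup n => act p.2 p.1 := by
    refine Continuous.clm_apply ?_ continuous_fst
    exact continuous_subtype_val.comp (continuous_inv.comp continuous_snd)
  -- Averaging over the group does not change the volume.
  have avg : ∀ A : Set E, MeasurableSet A → volume A = ∫⁻ x, μ {g | act g x ∈ A} := by
    intro A hA
    have h1 := Measure.prod_apply (μ := (volume : Measure E)) (ν := μ) (hact.measurable hA)
    have h2 := Measure.prod_apply_symm (μ := (volume : Measure E)) (ν := μ) (hact.measurable hA)
    have h3 : ∀ g, volume ((fun x : E => (x, g)) ⁻¹'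
        ((fun p : E × OrthGroup n => act p.2 p.1) ⁻¹' A)) = volume A := fun g =>
      (Unitary.linearIsometryEquiv (g⁻¹)).measurePreserving.measure_preimage hA.nullMeasurableSet
    simp only [h3, lintegral_const, hμ, mul_one] at h2
    rw [← h2, h1]
    rfl
  -- The average is constant on orbits.
  have orb : ∀ (A : Set E) (k : OrthGroup n) x, μ {g | act g (k.1 x) ∈ A} = μ {g | act g x ∈ A} := by
    intro A k x
    have := measure_preimage_mul μ k⁻¹ {g | act g x ∈ A}
    rw [← this]
    congr 1; ext g
    have e : act (k⁻¹ * g) x = act g (k.1 x) := by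
      simp only [act, mul_inv_rev, inv_inv]; rfl
    rw [mem_preimage, mem_ofPred_eq, mem_ofPred_eq, e]
  rw [avg K hK, avg _ hP]
  refine lintegral_mono fun x => ?_
  obtain ⟨z, hz, hxz⟩ := exists_orthogonal hn x
  let k : OrthGroup n := Unitary.linearIsometryEquiv.symm ((ℝ ∙ (x - z))ᗮ.reflection)
  have hk : k.1 x = z := Submodule.reflection_sub hz.symm
  rw [← orb (absPolar L) k x, hk]
  refine measure_mono fun g hg y hy => ?_
  refine (abs_inner_le_sinePair (x := act g x) ?_ ?_ y).trans (h _ hg y hy)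
  · simpa only [act_eq, LinearIsometryEquiv.norm_map] using hz
  · simpa only [act_eq, LinearIsometryEquiv.inner_map_map] using hxz

theorem volume_mul_le_of_sinePair_le_one {n : ℕ} (hn : 2 ≤ n)
    {K L : Set (EuclideanSpace ℝ (Fin n))} (hK : MeasurableSet K) (hL : MeasurableSet L)
    (h : ∀ x ∈ K, ∀ y ∈ L, sinePair x y ≤ 1) :
    volume K * volume L ≤ ENNReal.ofReal (omegaVol n) ^ 2 := by
  have : Nonempty (Fin n) := ⟨⟨0, by omega⟩⟩
  have hω : volume (closedBall (0 : EuclideanSpace ℝ (Fin n)) 1) = ENNReal.ofReal (omegaVol n) := by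
    rw [EuclideanSpace.volume_closedBall]
    simp only [ENNReal.ofReal_one, one_pow, one_mul, Fintype.card_fin, omegaVol]
    rw [add_comm (n / 2 : ℝ) 1, Real.sqrt_eq_rpow, ← Real.rpow_natCast,
      ← Real.rpow_mul Real.pi_nonneg]
    congr 3; ring
  rw [← hω]
  exact (mul_le_mul' (volume_le_absPolar hn hK h) le_rfl).trans (volume_absPolar_mul_le hL)

/-! ### The sine pairing and the theorem -/

theorem sinePair_smul_left {n : ℕ} {c : ℝ} (hc : 0 ≤ c) (x y : EuclideanSpace ℝ (Fin n)) :
    sinePair (c • x) y = c * sinePair x y := by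
  rw [sinePair, sinePair, norm_smul, inner_smul_left, ← Real.sqrt_sq hc, Real.sqrt_sq hc]
  rw [show (‖c‖ * ‖x‖) ^ 2 * ‖y‖ ^ 2 - ((starRingEnd ℝ) c * ⟪x, y⟫) ^ 2
    = c ^ 2 * (‖x‖ ^ 2 * ‖y‖ ^ 2 - ⟪x, y⟫ ^ 2) by
      simp only [Real.norm_eq_abs, conj_trivial, mul_pow, sq_abs]; ring]
  rw [Real.sqrt_mul (sq_nonneg c), Real.sqrt_sq hc]

theorem sinePair_le {n : ℕ} (x y : EuclideanSpace ℝ (Fin n)) : sinePair x y ≤ ‖x‖ * ‖y‖ := by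
  refine Real.sqrt_le_iff.2 ⟨by positivity, ?_⟩
  nlinarith [sq_nonneg ⟪x, y⟫]

/-- `sup_{x ∈ K, y ∈ L} [x,y] ≥ ω_n^{-2/n} (V(K)V(L))^{1/n}`. -/
theorem sup_sinePair_ge {n : ℕ} (hn : 2 ≤ n) {K L : Set (EuclideanSpace ℝ (Fin n))}
    (hKb : Bornology.IsBounded K) (hLb : Bornology.IsBounded L)
    (hK : MeasurableSet K) (hL : MeasurableSet L) :
    omegaVol (n : ℝ) ^ (-(2 : ℝ) / (n : ℝ)) *
      ((volume K).toReal * (volume L).toReal) ^ ((1 : ℝ) / (n : ℝ)) ≤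
    sSup (Set.image2 sinePair K L) := by
  have hn0 : (0 : ℝ) < n := by exact_mod_cast (by omega : 0 < n)
  have hbdd : BddAbove (Set.image2 sinePair K L) := by
    obtain ⟨a, ha⟩ := hKb.exists_norm_le
    obtain ⟨b, hb⟩ := hLb.exists_norm_le
    refine ⟨a * b, ?_⟩
    rintro _ ⟨x, hx, y, hy, rfl⟩
    exact (sinePair_le x y).trans (mul_le_mul (ha x hx) (hb y hy) (norm_nonneg _)
      ((norm_nonneg _).trans (ha x hx)))
  have hS0 : 0 ≤ sSup (Set.image2 sinePair K L) := Real.sSup_nonneg (by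
    rintro _ ⟨x, -, y, -, rfl⟩
    exact Real.sqrt_nonneg _)
  have hω : 0 < omegaVol n := by
    unfold omegaVol
    have := Real.Gamma_pos_of_pos (s := 1 + (n : ℝ) / 2) (by positivity)
    positivity
  -- A bound `s > sup` is positive, so `K` may be rescaled by `s⁻¹`.
  refine le_of_forall_gt_imp_ge_of_dense fun s hs => ?_
  have hs0 : 0 < s := hS0.trans_lt hs
  have hK' : MeasurableSet ((s • ·) ⁻¹' K) := (measurable_const_smul s) hK
  have key := volume_mul_le_of_sinePair_le_one hn hK' hL (by
    intro x hx y hy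
    have h1 := (le_csSup hbdd ⟨s • x, hx, y, hy, rfl⟩).trans hs.le
    rw [sinePair_smul_left hs0.le] at h1
    exact le_of_mul_le_mul_left (by rwa [mul_one]) hs0)
  rw [Measure.addHaar_preimage_smul _ hs0.ne', finrank_euclideanSpace_fin] at key
  have key' := ENNReal.toReal_mono (by finiteness) key
  rw [ENNReal.toReal_mul, ENNReal.toReal_mul, ENNReal.toReal_pow, ENNReal.toReal_ofReal hω.le,
    ENNReal.toReal_ofReal (abs_nonneg _), abs_of_nonneg (by positivity), mul_assoc,
    inv_mul_le_iff₀ (by positivity)] at key'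
  calc _ ≤ omegaVol n ^ (-(2 : ℝ) / n) * (s ^ n * omegaVol n ^ 2) ^ ((1 : ℝ) / n) := by
        gcongr
    _ = s := by
        rw [Real.mul_rpow (by positivity) (by positivity), ← Real.rpow_natCast s,
          ← Real.rpow_mul hs0.le, ← Real.rpow_natCast (omegaVol n), ← Real.rpow_mul hω.le,
          mul_left_comm, ← Real.rpow_add hω]
        have e1 : (n : ℝ) * (1 / n) = 1 := by field_simp
        have e2 : -(2 : ℝ) / n + ((2 : ℕ) : ℝ) * (1 / n) = 0 := by push_cast; field_simp; ring
        rw [e1, e2]; simp
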